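/- (Curie–Weiss free energy.) Fix J > 0 and for each n ≥ 1 let Z_n = Σ_{x ∈ {-1,1}^n} exp((J/n) · (Σ_{i=1}^n x_i)²). Then (1/n) · log Z_n converges, as n → ∞, to max_{m ∈ [−1,1]} [ J·m² − ((1−m)/2)·log((1−m)/2) − ((1+m)/2)·log((1+m)/2) ], with the convention 0·log 0 = 0. -/

import Mathlib

open scoped BigOperators

noncomputable section

/-- The discrete cube `{-1,1}^n`, as functions `Fin n → ({-1,1} : Finset ℝ)`. -/
abbrev Cube (n : ℕ) := Fin n → ({-1, 1} : Finset ℝ)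

/-- The functional being maximised. -/
def cwF (J m : ℝ) : ℝ :=
  J * m ^ 2 - ((1 - m) / 2) * Real.log ((1 - m) / 2)
          - ((1 + m) / 2) * Real.log ((1 + m) / 2)

/-- Product weights with mean `m`. -/
def cwW (m : ℝ) {n : ℕ} (x : Cube n) : ℝ := ∏ i, ((1 + m * (x i : ℝ)) / 2)

lemma cw_cases (a : ({-1, 1} : Finset ℝ)) : (a : ℝ) = -1 ∨ (a : ℝ) = 1 := by
  have h : (a : ℝ) ∈ ({-1, 1} : Finset ℝ) := a.2
  rwa [Finset.mem_insert, Finset.mem_singleton] at h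

lemma cw_sum (F : ℝ → ℝ) : ∑ a : ({-1, 1} : Finset ℝ), F a = F (-1) + F 1 := by
  rw [Finset.sum_coe_sort ({-1, 1} : Finset ℝ) F]
  rw [Finset.sum_pair]
  norm_num

lemma cwW_prod {n : ℕ} (G : Fin n → ℝ → ℝ) :
    ∑ x : Cube n, ∏ i, G i (x i : ℝ) = ∏ i, (G i (-1) + G i 1) := by
  simp_rw [← cw_sum]
  rw [Finset.prod_univ_sum, Fintype.piFinset_univ]

lemma cwW_sum (m : ℝ) (n : ℕ) : ∑ x : Cube n, cwW m x = 1 := by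
  unfold cwW
  rw [cwW_prod (fun _ a => (1 + m * a) / 2)]
  apply Finset.prod_eq_one
  intro i _
  ring

lemma cwW_sum_mul (m : ℝ) (n : ℕ) (g : ℝ → ℝ) (i : Fin n) :
    ∑ x : Cube n, cwW m x * g (x i) = (1 - m) / 2 * g (-1) + (1 + m) / 2 * g 1 := by
  have h : ∀ x : Cube n, cwW m x * g (x i) =
      ∏ j, (fun (j : Fin n) (a : ℝ) => (1 + m * a) / 2 * (if j = i then g a else 1)) j (x j) := by
    intro x
    simp only [cwW, Finset.prod_mul_distrib, Finset.prod_ite_eq', Finset.mem_univ, if_true]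
  simp_rw [h]
  rw [cwW_prod (fun (j : Fin n) (a : ℝ) => (1 + m * a) / 2 * (if j = i then g a else 1))]
  rw [Finset.prod_eq_single i]
  · rw [if_pos rfl, if_pos rfl]; ring
  · intro j _ hj
    simp [hj]; ring
  · simp

lemma cwW_sum_sum (m : ℝ) (n : ℕ) (g : ℝ → ℝ) :
    ∑ x : Cube n, cwW m x * ∑ i, g (x i)
      = n * ((1 - m) / 2 * g (-1) + (1 + m) / 2 * g 1) := by
  simp_rw [Finset.mul_sum]
  rw [Finset.sum_comm]
  simp_rw [cwW_sum_mul]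
  rw [Finset.sum_const, Finset.card_univ, Fintype.card_fin, nsmul_eq_mul]

lemma cwW_nonneg {m : ℝ} (h1 : -1 ≤ m) (h2 : m ≤ 1) {n : ℕ} (x : Cube n) : 0 ≤ cwW m x := by
  apply Finset.prod_nonneg
  intro i _
  rcases cw_cases (x i) with h | h <;> rw [h] <;> linarith

lemma cwW_mul_log (m : ℝ) {n : ℕ} (x : Cube n) :
    cwW m x * Real.log (cwW m x) = cwW m x * ∑ i, Real.log ((1 + m * (x i : ℝ)) / 2) := by
  by_cases h : cwW m x = 0
  · simp [h]
  · congr 1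
    unfold cwW at h ⊢
    rw [Real.log_prod]
    intro i hi
    exact (Finset.prod_ne_zero_iff.1 h) i hi

lemma cw_lower {J m : ℝ} (hJ : 0 < J) (h1 : -1 ≤ m) (h2 : m ≤ 1) {n : ℕ} (hn : 1 ≤ n) :
    Real.exp (n * cwF J m) ≤
      ∑ x : Cube n, Real.exp ((J / n) * (∑ i : Fin n, (x i : ℝ)) ^ 2) := by
  have hn0 : (0 : ℝ) < n := by exact_mod_cast hn
  set c := (n : ℝ) * cwF J m with hc
  have key : ∀ x : Cube n, Real.exp c * (cwW m x * (1 - c)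
      + J / n * (cwW m x * (2 * (n * m) * (∑ i : Fin n, (x i : ℝ)) - (n * m) ^ 2))
      - cwW m x * ∑ i, Real.log ((1 + m * (x i : ℝ)) / 2)) ≤
      Real.exp ((J / n) * (∑ i : Fin n, (x i : ℝ)) ^ 2) := by
    intro x
    rw [← cwW_mul_log]
    rcases (cwW_nonneg h1 h2 x).eq_or_lt with h | h
    · rw [← h]; simp; positivity
    · set w := cwW m x
      set S := ∑ i : Fin n, (x i : ℝ)
      have e1 : Real.exp ((J / n) * S ^ 2)
          = Real.exp c * w * Real.exp (J / n * S ^ 2 - Real.log w - c) := by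
        have e0 : w = Real.exp (Real.log w) := (Real.exp_log h).symm
        calc Real.exp ((J / n) * S ^ 2)
            = Real.exp (c + Real.log w + (J / n * S ^ 2 - Real.log w - c)) := by
              congr 1; ring
          _ = _ := by rw [Real.exp_add, Real.exp_add, ← e0]
      rw [e1, mul_assoc (Real.exp c)]
      have e2 := Real.add_one_le_exp (J / n * S ^ 2 - Real.log w - c)
      have e3 : J / n * (2 * (n * m) * S - (n * m) ^ 2) ≤ J / n * S ^ 2 := by
        apply mul_le_mul_of_nonneg_left _ (by positivity)
        nlinarith [sq_nonneg (S - n * m)]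
      apply mul_le_mul_of_nonneg_left _ (Real.exp_pos _).le
      have : w * (1 - c + J / n * (2 * (n * m) * S - (n * m) ^ 2) - Real.log w) ≤
          w * Real.exp (J / n * S ^ 2 - Real.log w - c) :=
        mul_le_mul_of_nonneg_left (by linarith) h.le
      linarith
  refine le_trans (le_of_eq ?_) (Finset.sum_le_sum fun x _ => key x)
  rw [← Finset.mul_sum, Finset.sum_sub_distrib, Finset.sum_add_distrib, ← Finset.sum_mul,
    ← Finset.mul_sum, cwW_sum, cwW_sum_sum m n (fun a => Real.log ((1 + m * a) / 2))]
  have e4 : ∑ x : Cube n, cwW m x * (2 * (n * m) * (∑ i : Fin n, (x i : ℝ)) - (n * m) ^ 2)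
      = (n * m) ^ 2 := by
    have := cwW_sum_sum m n (fun a => a)
    have e5 : ∀ x : Cube n, cwW m x * (2 * (n * m) * (∑ i : Fin n, (x i : ℝ)) - (n * m) ^ 2)
      = 2 * (n * m) * (cwW m x * ∑ i : Fin n, (x i : ℝ)) - cwW m x * (n * m) ^ 2 := by
      intro x; ring
    simp_rw [e5]
    rw [Finset.sum_sub_distrib, ← Finset.mul_sum, ← Finset.sum_mul, this, cwW_sum]
    ring
  rw [e4, hc]
  have e6 : J / n * (n * m) ^ 2 = n * (J * m ^ 2) := by field_simp
  rw [e6]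
  conv_lhs => rw [← mul_one (Real.exp _)]
  congr 1
  unfold cwF
  rw [show (1 + m * -1) / 2 = (1 - m) / 2 by ring, mul_one]
  ring

lemma cw_grid {n : ℕ} (x : Cube n) :
    ∃ k ∈ Finset.range (n + 1), ∑ i : Fin n, (x i : ℝ) = 2 * (k : ℝ) - n := by
  refine ⟨(Finset.univ.filter fun i => (x i : ℝ) = 1).card, ?_, ?_⟩
  · rw [Finset.mem_range, Nat.lt_succ_iff]
    simpa using Finset.card_filter_le (Finset.univ : Finset (Fin n)) (fun i => (x i : ℝ) = 1)
  · rw [Finset.card_filter]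
    push_cast
    rw [Finset.mul_sum]
    have : (n : ℝ) = ∑ i : Fin n, (1 : ℝ) := by simp
    conv_rhs => rw [this]
    rw [← Finset.sum_sub_distrib]
    apply Finset.sum_congr rfl
    intro i _
    rcases cw_cases (x i) with h | h <;> rw [h] <;> norm_num

lemma cw_point (J : ℝ) {n : ℕ} (hn : 1 ≤ n) (x : Cube n) (m : ℝ)
    (hm : ∑ i : Fin n, (x i : ℝ) = n * m) :
    Real.exp ((J / n) * (∑ i : Fin n, (x i : ℝ)) ^ 2) = Real.exp (n * cwF J m) * cwW m x := by
  have hn0 : (0 : ℝ) < n := by exact_mod_cast hn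
  have pos : ∀ i, 0 < (1 + m * (x i : ℝ)) / 2 := by
    intro i
    have hsq : (x i : ℝ) * (x i : ℝ) = 1 := by
      rcases cw_cases (x i) with h | h <;> rw [h] <;> norm_num
    have h3 : ∑ j ∈ Finset.univ.erase i, (-1 : ℝ) ≤
        ∑ j ∈ Finset.univ.erase i, (x i : ℝ) * (x j : ℝ) := by
      apply Finset.sum_le_sum
      intro j _
      rcases cw_cases (x i) with h | h <;> rcases cw_cases (x j) with hh | hh <;>
        rw [h, hh] <;> norm_num
    have h4 := Finset.add_sum_erase Finset.univ (fun j => (x i : ℝ) * (x j : ℝ))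
      (Finset.mem_univ i)
    rw [← Finset.mul_sum Finset.univ, hm] at h4
    have h5 : ∑ j ∈ Finset.univ.erase i, (-1 : ℝ) = 1 - n := by
      have := Finset.add_sum_erase Finset.univ (fun j : Fin n => (-1 : ℝ))
        (Finset.mem_univ i)
      simp only [Finset.sum_const, Finset.card_univ, Fintype.card_fin, nsmul_eq_mul] at this ⊢
      linarith
    have h6 : 0 < n * (1 + m * (x i : ℝ)) := by
      nlinarith
    have := pos_of_mul_pos_right h6 hn0.le
    linarith
  have hw : 0 < cwW m x := Finset.prod_pos fun i _ => pos i
  rw [← Real.exp_log hw, ← Real.exp_add]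
  congr 1
  have hl : Real.log (cwW m x) = ∑ i, Real.log ((1 + m * (x i : ℝ)) / 2) := by
    unfold cwW
    rw [Real.log_prod]
    intro i _
    exact (pos i).ne'
  have ha : ∀ i, Real.log ((1 + m * (x i : ℝ)) / 2) =
      (Real.log ((1 + m) / 2) + Real.log ((1 - m) / 2)) / 2
      + (x i : ℝ) * ((Real.log ((1 + m) / 2) - Real.log ((1 - m) / 2)) / 2) := by
    intro i
    rcases cw_cases (x i) with h | h <;> rw [h]
    · rw [show (1 + m * -1) / 2 = (1 - m) / 2 by ring]; ring
    · rw [mul_one]; ring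
  rw [hl]
  simp_rw [ha]
  rw [Finset.sum_add_distrib, ← Finset.sum_mul, hm]
  simp only [Finset.sum_const, Finset.card_univ, Fintype.card_fin, nsmul_eq_mul]
  unfold cwF
  field_simp
  ring

lemma cw_upper {J M : ℝ} (hM : ∀ m ∈ Set.Icc (-1 : ℝ) 1, cwF J m ≤ M) {n : ℕ} (hn : 1 ≤ n) :
    ∑ x : Cube n, Real.exp ((J / n) * (∑ i : Fin n, (x i : ℝ)) ^ 2) ≤
      (n + 1) * Real.exp (n * M) := by
  have hn0 : (0 : ℝ) < n := by exact_mod_cast hn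
  have hk : ∀ k ∈ Finset.range (n + 1), (2 * (k : ℝ) - n) / n ∈ Set.Icc (-1 : ℝ) 1 := by
    intro k hk
    have h1 : (k : ℝ) ≤ n := by
      exact_mod_cast Nat.lt_succ_iff.1 (Finset.mem_range.1 hk)
    have h0 : (0 : ℝ) ≤ k := by positivity
    constructor
    · rw [le_div_iff₀ hn0]; linarith
    · rw [div_le_iff₀ hn0]; linarith
  have key : ∀ x : Cube n, Real.exp ((J / n) * (∑ i : Fin n, (x i : ℝ)) ^ 2) ≤
      ∑ k ∈ Finset.range (n + 1), Real.exp (n * M) * cwW ((2 * (k : ℝ) - n) / n) x := by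
    intro x
    obtain ⟨k, hkr, hks⟩ := cw_grid x
    rw [cw_point J hn x ((2 * (k : ℝ) - n) / n) (by rw [hks]; field_simp)]
    refine le_trans ?_ (Finset.single_le_sum (f := fun k : ℕ =>
      Real.exp (n * M) * cwW ((2 * (k : ℝ) - n) / n) x) ?_ hkr)
    · apply mul_le_mul_of_nonneg_right _ (cwW_nonneg (hk k hkr).1 (hk k hkr).2 x)
      exact Real.exp_le_exp.2 (mul_le_mul_of_nonneg_left (hM _ (hk k hkr)) hn0.le)
    · intro j hj
      exact mul_nonneg (Real.exp_pos _).le (cwW_nonneg (hk j hj).1 (hk j hj).2 x)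
  refine (Finset.sum_le_sum fun x _ => key x).trans (le_of_eq ?_)
  rw [Finset.sum_comm]
  simp_rw [← Finset.mul_sum, cwW_sum]
  simp [mul_comm]

lemma cwF_continuous (J : ℝ) : Continuous (cwF J) := by
  have : cwF J = fun m => J * m ^ 2 + Real.negMulLog ((1 - m) / 2)
      + Real.negMulLog ((1 + m) / 2) := by
    funext m
    unfold cwF Real.negMulLog
    ring
  rw [this]
  fun_prop

lemma cw_log_lim : Filter.Tendsto (fun n : ℕ => Real.log ((n : ℝ) + 1) / (n : ℝ))
    Filter.atTop (nhds 0) := by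
  have h1 : Filter.Tendsto (fun n : ℕ => Real.log ((n : ℝ) + 1) / ((n : ℝ) + 1) * (1 + 1 / (n : ℝ)))
      Filter.atTop (nhds (0 * (1 + 0))) := by
    refine Filter.Tendsto.mul ?_ (tendsto_const_nhds.add tendsto_one_div_atTop_nhds_zero_nat)
    have h := Real.isLittleO_log_id_atTop.tendsto_div_nhds_zero
    exact h.comp (Filter.tendsto_atTop_add_const_right _ 1 tendsto_natCast_atTop_atTop)
  rw [zero_mul] at h1
  refine h1.congr' ?_
  filter_upwards [Filter.eventually_ge_atTop 1] with n hn
  have hn0 : (0 : ℝ) < n := by exact_mod_cast hn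
  field_simp

/-- Curie–Weiss free energy: `(1/n) log Z_n` converges to
`max_{m ∈ [-1,1]} [ J m² − ((1−m)/2) log((1−m)/2) − ((1+m)/2) log((1+m)/2) ]`
(with the convention `0 · log 0 = 0`, automatic since `Real.log 0 = 0`). -/
theorem curieWeiss_free_energy (J : ℝ) (hJ : 0 < J) (Z : ℕ → ℝ)
    (hZ : ∀ n : ℕ, 1 ≤ n →
      Z n = ∑ x : Cube n, Real.exp ((J / n) * (∑ i : Fin n, (x i : ℝ)) ^ 2)) :
    Filter.Tendsto (fun n : ℕ => (1 / (n : ℝ)) * Real.log (Z n)) Filter.atTop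
      (nhds (sSup ((fun m : ℝ =>
        J * m ^ 2 - ((1 - m) / 2) * Real.log ((1 - m) / 2)
          - ((1 + m) / 2) * Real.log ((1 + m) / 2)) '' Set.Icc (-1 : ℝ) 1))) := by
  change Filter.Tendsto _ _ (nhds (sSup (cwF J '' Set.Icc (-1 : ℝ) 1)))
  obtain ⟨m₀, hm₀, hmax⟩ := isCompact_Icc.exists_sSup_image_eq
    (Set.nonempty_Icc.2 (by norm_num : (-1 : ℝ) ≤ 1)) (cwF_continuous J).continuousOn
  have hM : ∀ m ∈ Set.Icc (-1 : ℝ) 1, cwF J m ≤ sSup (cwF J '' Set.Icc (-1 : ℝ) 1) := by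
    intro m hm
    exact le_csSup (isCompact_Icc.image (cwF_continuous J)).bddAbove (Set.mem_image_of_mem _ hm)
  set M := sSup (cwF J '' Set.Icc (-1 : ℝ) 1)
  have hlim : Filter.Tendsto (fun n : ℕ => M + Real.log ((n : ℝ) + 1) / (n : ℝ))
      Filter.atTop (nhds M) := by
    simpa using cw_log_lim.const_add M
  refine tendsto_of_tendsto_of_tendsto_of_le_of_le' tendsto_const_nhds hlim ?_ ?_
  · filter_upwards [Filter.eventually_ge_atTop 1] with n hn
    have hn0 : (0 : ℝ) < n := by exact_mod_cast hn
    have h := cw_lower hJ hm₀.1 hm₀.2 hn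
    rw [← hZ n hn, ← hmax] at h
    have hh := (Real.le_log_iff_exp_le ((Real.exp_pos _).trans_le h)).2 h
    rw [one_div, ← div_eq_inv_mul, le_div_iff₀ hn0]
    linarith
  · filter_upwards [Filter.eventually_ge_atTop 1] with n hn
    have hn0 : (0 : ℝ) < n := by exact_mod_cast hn
    have h := cw_lower hJ hm₀.1 hm₀.2 hn
    have h2 := cw_upper hM hn
    rw [← hZ n hn] at h h2
    have h3 := Real.log_le_log ((Real.exp_pos _).trans_le h) h2
    rw [Real.log_mul (by positivity) (Real.exp_pos _).ne', Real.log_exp] at h3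
    rw [one_div, ← div_eq_inv_mul, div_le_iff₀ hn0, add_mul, div_mul_cancel₀ _ hn0.ne']
    linarith
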